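/- Say that a permutation τ ∈ S_n with one-line notation τ₁⋯τ_n avoids the decreasing k-pattern if there is no position p ∈ [n−1] with τ_p > τ_{p+1} for which at least k indices q with p+1 < q ≤ n satisfy τ_{p+1} < τ_q < τ_p. Then for all k ≥ 1 and n ≥ 1, every equivalence class of the k-twist congruence ≡ᵏ on S_n contains exactly one permutation avoiding the decreasing k-pattern, and this permutation is the weak-order minimum of the class. -/

import Mathlib

/-!
Orient the rewriting rule downwards: `downStep` sorts an adjacent descent `c a` into `a c` when
at least `k` values strictly between `a` and `c` occur later. Every rewriting step is a downward
step or the reverse of one, and the permutations avoiding the decreasing `k`-pattern are exactly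
the normal forms of `downStep`.

Each downward step strictly decreases the weak order (`downStep_weakLE`, `downStep_not_weakLE`), so
`downStep` terminates. It is locally confluent (`downStep_locally_confluent`): steps at disjoint
pairs of positions commute, and two overlapping steps start from consecutive entries `c b a` with
`a < b < c` and at least `k` later values in each of `(a, b)` and `(b, c)`, so that both can be
continued down to `a b c`. As in Newman's lemma, every permutation then has a unique normal form
below which all its reducts lie (`exists_normal_form`). This normal form is constant on congruence
classes, and it is the weak-order minimum because every element of the class descends to it.
-/

/-- The (right) weak order on permutations of `Fin n`: `τ ≤ σ` iff every coinversion of `τ`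
(pair of values `i < j` whose positions in `τ` are inverted) is a coinversion of `σ`. -/
def weakLE {n : ℕ} (τ σ : Equiv.Perm (Fin n)) : Prop :=
  ∀ i j : Fin n, i < j → τ.symm j < τ.symm i → σ.symm j < σ.symm i
/-- One rewriting step of the `k`-twist congruence: exchange two adjacent entries of the
one-line notation (positions `p` and `q = p+1`) provided at least `k` values strictly
between the two exchanged values occur at later positions. -/
def twistStep (k : ℕ) {n : ℕ} (τ τ' : Equiv.Perm (Fin n)) : Prop :=
  ∃ p q : Fin n, (q : ℕ) = (p : ℕ) + 1 ∧ τ' = τ * Equiv.swap p q ∧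
    k ≤ (Finset.univ.filter (fun b : Fin n =>
      min (τ p) (τ q) < b ∧ b < max (τ p) (τ q) ∧ q < τ.symm b)).card

/-- The `k`-twist congruence `≡ᵏ` on permutations of `Fin n`: the equivalence relation
generated by the rewriting rule `twistStep`. -/
def twistCong (k : ℕ) {n : ℕ} : Equiv.Perm (Fin n) → Equiv.Perm (Fin n) → Prop :=
  Relation.EqvGen (twistStep k)

/-- `τ` avoids the decreasing `k`-pattern: there is no descent position `p` (with `q = p+1`
and `τ_q < τ_p`) such that at least `k` values strictly between `τ_q` and `τ_p` occur at
positions after `q`. -/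
def avoidsDecreasingPattern (k : ℕ) {n : ℕ} (τ : Equiv.Perm (Fin n)) : Prop :=
  ¬ ∃ p q : Fin n, (q : ℕ) = (p : ℕ) + 1 ∧ τ q < τ p ∧
    k ≤ (Finset.univ.filter (fun b : Fin n => τ q < b ∧ b < τ p ∧ q < τ.symm b)).card

/-! ### Downward steps -/

/-- At least `k` values strictly between `a` and `c` occur in `τ` after position `q`. -/
def manyBetween (k : ℕ) {n : ℕ} (τ : Equiv.Perm (Fin n)) (q a c : Fin n) : Prop :=
  k ≤ (Finset.univ.filter (fun b : Fin n => a < b ∧ b < c ∧ q < τ.symm b)).card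

/-- The rewriting step oriented downwards in the weak order: an adjacent descent whose values have
at least `k` values between them at later positions is sorted. -/
def downStep (k : ℕ) {n : ℕ} (τ τ' : Equiv.Perm (Fin n)) : Prop :=
  ∃ p q : Fin n, (q : ℕ) = (p : ℕ) + 1 ∧ τ q < τ p ∧ τ' = τ * Equiv.swap p q ∧
    manyBetween k τ q (τ q) (τ p)

lemma symm_mul_swap {n : ℕ} (τ : Equiv.Perm (Fin n)) (p q b : Fin n) :
    (τ * Equiv.swap p q).symm b = Equiv.swap p q (τ.symm b) := by
  rw [Equiv.symm_apply_eq]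
  simp

/-- A swap on one side of the cut-off position `r` does not affect which values occur after `r`. -/
lemma manyBetween_mul_swap {k n : ℕ} {τ : Equiv.Perm (Fin n)} {p q r a c : Fin n}
    (h : r < p ↔ r < q) : manyBetween k (τ * Equiv.swap p q) r a c ↔ manyBetween k τ r a c := by
  have key : ∀ x : Fin n, r < Equiv.swap p q x ↔ r < x := by
    intro x
    rw [Equiv.swap_apply_def]
    split_ifs with h1 h2
    · rw [h1, h]
    · rw [h2, h]
    · rfl
  simp only [manyBetween, symm_mul_swap, key]

lemma manyBetween_mono {k n : ℕ} {τ : Equiv.Perm (Fin n)} {r r' a a' c c' : Fin n}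
    (h : manyBetween k τ r a c) (hr : r' ≤ r) (ha : a' ≤ a) (hc : c ≤ c') :
    manyBetween k τ r' a' c' := by
  refine le_trans h (Finset.card_le_card fun b hb => ?_)
  simp only [Finset.mem_filter, Finset.mem_univ, true_and] at hb ⊢
  exact ⟨ha.trans_lt hb.1, hb.2.1.trans_le hc, hr.trans_lt hb.2.2⟩

/-- The cut-off moves one position to the right when the value there is not above `a`. -/
lemma manyBetween_succ {k n : ℕ} {τ : Equiv.Perm (Fin n)} {q r a c : Fin n}
    (h : manyBetween k τ q a c) (hr : (r : ℕ) = q + 1) (ha : τ r ≤ a) :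
    manyBetween k τ r a c := by
  refine le_trans h (Finset.card_le_card fun b hb => ?_)
  simp only [Finset.mem_filter, Finset.mem_univ, true_and] at hb ⊢
  refine ⟨hb.1, hb.2.1, ?_⟩
  have hne : τ.symm b ≠ r := by
    rintro h
    rw [Equiv.symm_apply_eq] at h
    exact absurd hb.1 (by rw [h]; exact not_lt.mpr ha)
  have := hb.2.2
  omega

lemma twistStep_iff {k n : ℕ} {τ τ' : Equiv.Perm (Fin n)} :
    twistStep k τ τ' ↔ downStep k τ τ' ∨ downStep k τ' τ := by
  constructor
  · rintro ⟨p, q, hpq, rfl, h⟩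
    have hne : τ p ≠ τ q := fun h => by have := τ.injective h; omega
    rcases lt_or_gt_of_ne hne with hlt | hlt
    · right
      refine ⟨p, q, hpq, by simpa using hlt, by simp [mul_assoc], ?_⟩
      rw [manyBetween_mul_swap (by omega)]
      simpa [manyBetween, min_eq_left hlt.le, max_eq_right hlt.le] using h
    · left
      refine ⟨p, q, hpq, hlt, rfl, ?_⟩
      simpa [manyBetween, min_eq_right hlt.le, max_eq_left hlt.le] using h
  · rintro (⟨p, q, hpq, hlt, rfl, h⟩ | ⟨p, q, hpq, hlt, rfl, h⟩)
    · refine ⟨p, q, hpq, rfl, ?_⟩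
      simpa [manyBetween, min_eq_right hlt.le, max_eq_left hlt.le] using h
    · refine ⟨p, q, hpq, by simp [mul_assoc], ?_⟩
      rw [← manyBetween_mul_swap (p := p) (q := q) (by omega)] at h
      simpa [manyBetween, min_eq_left hlt.le, max_eq_right hlt.le] using h

/-! ### Termination -/

lemma downStep_weakLE {k n : ℕ} {τ τ' : Equiv.Perm (Fin n)} (h : downStep k τ τ') :
    weakLE τ' τ := by
  obtain ⟨p, q, hpq, hlt, rfl, -⟩ := h
  intro i j hij h
  rw [symm_mul_swap, symm_mul_swap] at h
  obtain ⟨x, rfl⟩ := τ.surjective i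
  obtain ⟨y, rfl⟩ := τ.surjective j
  simp only [Equiv.symm_apply_apply] at h ⊢
  have h1 : ¬ (x = p ∧ y = q) := by
    rintro ⟨rfl, rfl⟩
    exact lt_asymm hij hlt
  rw [Equiv.swap_apply_def, Equiv.swap_apply_def] at h
  split_ifs at h <;> omega

lemma downStep_not_weakLE {k n : ℕ} {τ τ' : Equiv.Perm (Fin n)} (h : downStep k τ τ') :
    ¬ weakLE τ τ' := by
  obtain ⟨p, q, hpq, hlt, rfl, -⟩ := h
  intro h
  have := h (τ q) (τ p) hlt (by simp only [Equiv.symm_apply_apply]; omega)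
  simp only [symm_mul_swap, Equiv.symm_apply_apply, Equiv.swap_apply_left,
    Equiv.swap_apply_right] at this
  omega

lemma reduces_weakLE {k n : ℕ} {τ τ' : Equiv.Perm (Fin n)}
    (h : Relation.ReflTransGen (downStep k) τ τ') : weakLE τ' τ := by
  induction h with
  | refl => exact fun _ _ _ h => h
  | tail _ h ih => exact fun i j hij hh => ih i j hij (downStep_weakLE h i j hij hh)

lemma downStep_wellFounded (k n : ℕ) :
    WellFounded (fun τ' τ : Equiv.Perm (Fin n) => downStep k τ τ') := by
  let R : Equiv.Perm (Fin n) → Equiv.Perm (Fin n) → Prop :=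
    fun σ τ => weakLE σ τ ∧ ¬ weakLE τ σ
  have : IsTrans _ R := ⟨fun a b c hab hbc =>
    ⟨fun i j hij h => hbc.1 i j hij (hab.1 i j hij h),
      fun hca => hab.2 fun i j hij h => hca i j hij (hbc.1 i j hij h)⟩⟩
  have : Std.Irrefl R := ⟨fun a h => h.2 h.1⟩
  exact Subrelation.wf (fun h => ⟨downStep_weakLE h, downStep_not_weakLE h⟩)
    (Finite.wellFounded_of_trans_of_irrefl R)

/-! ### Local confluence -/

/-- Overlapping steps: the entries `c b a` at consecutive positions `p, q, r` are sorted to `a b c`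
along both sides of the hexagon. -/
lemma downStep_confluent_overlap {k n : ℕ} {τ : Equiv.Perm (Fin n)} {p q r : Fin n}
    (hpq : (q : ℕ) = p + 1) (hqr : (r : ℕ) = q + 1) (hcb : τ q < τ p) (hba : τ r < τ q)
    (h1 : manyBetween k τ q (τ q) (τ p)) (h2 : manyBetween k τ r (τ r) (τ q)) :
    Relation.Join (Relation.ReflTransGen (downStep k))
      (τ * Equiv.swap p q) (τ * Equiv.swap q r) := by
  have npq : p ≠ q := by omega
  have nqr : q ≠ r := by omega
  have npr : p ≠ r := by omega
  have hbc : manyBetween k τ r (τ q) (τ p) := manyBetween_succ h1 hqr hba.le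
  have h3 : manyBetween k τ r (τ r) (τ p) := manyBetween_mono hbc le_rfl hba.le le_rfl
  have hqr' : q ≤ r := by omega
  have e1 : Equiv.swap p q r = r := Equiv.swap_apply_of_ne_of_ne npr.symm nqr.symm
  have e2 : Equiv.swap q r p = p := Equiv.swap_apply_of_ne_of_ne npq npr
  refine ⟨τ * Equiv.swap p q * Equiv.swap q r * Equiv.swap p q, ?_, ?_⟩
  · refine (Relation.ReflTransGen.single ?_).tail ?_ (b := τ * Equiv.swap p q * Equiv.swap q r)
    · refine ⟨q, r, hqr, by simpa [e1] using hba.trans hcb, rfl, ?_⟩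
      rw [manyBetween_mul_swap (by omega)]
      simpa [e1] using h3
    · refine ⟨p, q, hpq, by simpa [e1, e2] using hba, rfl, ?_⟩
      refine manyBetween_mono (r := r) ?_ hqr' le_rfl le_rfl
      rw [manyBetween_mul_swap (by omega), manyBetween_mul_swap (by omega)]
      simpa [e1, e2] using h2
  · have braid : τ * Equiv.swap p q * Equiv.swap q r * Equiv.swap p q
        = τ * Equiv.swap q r * Equiv.swap p q * Equiv.swap q r := by
      have l := Equiv.swap_mul_swap_mul_swap npq npr
      have l' := Equiv.swap_mul_swap_mul_swap nqr.symm npr.symm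
      rw [Equiv.swap_comm r q, Equiv.swap_comm q p] at l'
      simp only [mul_assoc] at l l' ⊢
      rw [l, l', Equiv.swap_comm]
    rw [braid]
    refine (Relation.ReflTransGen.single ?_).tail ?_ (b := τ * Equiv.swap q r * Equiv.swap p q)
    · refine ⟨p, q, hpq, by simpa [e2] using hba.trans hcb, rfl, ?_⟩
      refine manyBetween_mono (r := r) ?_ hqr' le_rfl le_rfl
      rw [manyBetween_mul_swap (by omega)]
      simpa [e2] using h3
    · refine ⟨q, r, hqr, by simpa [e1, e2] using hcb, rfl, ?_⟩
      rw [manyBetween_mul_swap (by omega), manyBetween_mul_swap (by omega)]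
      simpa [e1, e2] using hbc

/-- Steps at disjoint pairs of positions commute. -/
lemma downStep_confluent_disjoint {k n : ℕ} {τ : Equiv.Perm (Fin n)} {p q p' q' : Fin n}
    (hpq : (q : ℕ) = p + 1) (hpq' : (q' : ℕ) = p' + 1) (hsep : q < p')
    (hlt : τ q < τ p) (hlt' : τ q' < τ p')
    (h1 : manyBetween k τ q (τ q) (τ p)) (h2 : manyBetween k τ q' (τ q') (τ p')) :
    Relation.Join (Relation.ReflTransGen (downStep k))
      (τ * Equiv.swap p q) (τ * Equiv.swap p' q') := by
  have e1 : Equiv.swap p q p' = p' := Equiv.swap_apply_of_ne_of_ne (by omega) (by omega)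
  have e2 : Equiv.swap p q q' = q' := Equiv.swap_apply_of_ne_of_ne (by omega) (by omega)
  have e3 : Equiv.swap p' q' p = p := Equiv.swap_apply_of_ne_of_ne (by omega) (by omega)
  have e4 : Equiv.swap p' q' q = q := Equiv.swap_apply_of_ne_of_ne (by omega) (by omega)
  have comm : Equiv.swap p q * Equiv.swap p' q' = Equiv.swap p' q' * Equiv.swap p q := by
    have := Equiv.mul_swap_eq_swap_mul (Equiv.swap p q) p' q'
    rwa [e1, e2] at this
  refine ⟨τ * Equiv.swap p q * Equiv.swap p' q', .single ?_, .single ?_⟩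
  · refine ⟨p', q', hpq', by simpa [e1, e2] using hlt', rfl, ?_⟩
    rw [manyBetween_mul_swap (by omega)]
    simpa [e1, e2] using h2
  · refine ⟨p, q, hpq, by simpa [e3, e4] using hlt, by simp only [mul_assoc, comm], ?_⟩
    rw [manyBetween_mul_swap (by omega)]
    simpa [e3, e4] using h1

lemma join_symm {α : Type*} {r : α → α → Prop} {a b : α} (h : Relation.Join r a b) :
    Relation.Join r b a := by
  obtain ⟨d, h1, h2⟩ := h
  exact ⟨d, h2, h1⟩

lemma downStep_locally_confluent {k n : ℕ} {τ τ₁ τ₂ : Equiv.Perm (Fin n)}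
    (h₁ : downStep k τ τ₁) (h₂ : downStep k τ τ₂) :
    Relation.Join (Relation.ReflTransGen (downStep k)) τ₁ τ₂ := by
  obtain ⟨p, q, hpq, hlt, rfl, h⟩ := h₁
  obtain ⟨p', q', hpq', hlt', rfl, hm⟩ := h₂
  rcases lt_trichotomy q p' with hs | rfl | hs
  · exact downStep_confluent_disjoint hpq hpq' hs hlt hlt' h hm
  · exact downStep_confluent_overlap hpq hpq' hlt hlt' h hm
  rcases lt_trichotomy q' p with hs' | rfl | hs'
  · exact join_symm (downStep_confluent_disjoint hpq' hpq hs' hlt' hlt hm h)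
  · exact join_symm (downStep_confluent_overlap hpq' hpq hlt' hlt hm h)
  -- Neither pair of positions begins at or after the end of the other, so they coincide.
  obtain rfl : p = p' := by omega
  obtain rfl : q = q' := by omega
  exact ⟨_, .refl, .refl⟩

/-! ### Normal forms -/

lemma avoids_iff_normal {k n : ℕ} {τ : Equiv.Perm (Fin n)} :
    avoidsDecreasingPattern k τ ↔ ∀ τ', ¬ downStep k τ τ' := by
  constructor
  · rintro h τ' ⟨p, q, hpq, hlt, -, hm⟩
    exact h ⟨p, q, hpq, hlt, hm⟩
  · rintro h ⟨p, q, hpq, hlt, hm⟩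
    exact h _ ⟨p, q, hpq, hlt, rfl, hm⟩

lemma eq_of_avoids_of_reduces {k n : ℕ} {τ τ' : Equiv.Perm (Fin n)}
    (h : avoidsDecreasingPattern k τ) (hr : Relation.ReflTransGen (downStep k) τ τ') :
    τ = τ' := by
  rcases hr.cases_head with h' | ⟨σ, hσ, -⟩
  · exact h'
  · exact absurd hσ (avoids_iff_normal.mp h σ)

/-- Newman's lemma for `downStep`: every permutation has a normal form to which all its reducts
reduce. -/
lemma exists_normal_form (k : ℕ) {n : ℕ} (τ : Equiv.Perm (Fin n)) :
    ∃ μ, Relation.ReflTransGen (downStep k) τ μ ∧ avoidsDecreasingPattern k μ ∧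
      ∀ σ, Relation.ReflTransGen (downStep k) τ σ → Relation.ReflTransGen (downStep k) σ μ := by
  induction τ using (downStep_wellFounded k n).induction with
  | _ τ ih =>
  by_cases hτ : avoidsDecreasingPattern k τ
  · refine ⟨τ, .refl, hτ, fun σ hσ => ?_⟩
    rw [← eq_of_avoids_of_reduces hτ hσ]
  obtain ⟨τ₁, h₁⟩ : ∃ τ₁, downStep k τ τ₁ := by
    by_contra! hno
    exact hτ (avoids_iff_normal.mpr hno)
  obtain ⟨μ, hμ, hav, hμ'⟩ := ih τ₁ h₁
  refine ⟨μ, hμ.head h₁, hav, fun σ hσ => ?_⟩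
  rcases hσ.cases_head with rfl | ⟨τ₂, h₂, hσ₂⟩
  · exact hμ.head h₁
  obtain ⟨μ₂, hμ₂, hav₂, hred₂⟩ := ih τ₂ h₂
  obtain ⟨d, hd₁, hd₂⟩ := downStep_locally_confluent h₁ h₂
  -- The common reduct `d` reduces to `μ₂`, so `μ₂` is a reduct of `τ₁` and reduces to `μ`.
  obtain rfl : μ₂ = μ := eq_of_avoids_of_reduces hav₂ (hμ' _ (hd₁.trans (hred₂ d hd₂)))
  exact hred₂ σ hσ₂

/-- Reducing to a given normal form is invariant under the congruence. -/
lemma reduces_iff_of_twistCong {k n : ℕ} {μ σ τ : Equiv.Perm (Fin n)}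
    (hμ : avoidsDecreasingPattern k μ) (h : twistCong k σ τ) :
    Relation.ReflTransGen (downStep k) σ μ ↔ Relation.ReflTransGen (downStep k) τ μ := by
  have key : ∀ {σ σ' : Equiv.Perm (Fin n)}, downStep k σ σ' →
      (Relation.ReflTransGen (downStep k) σ μ ↔ Relation.ReflTransGen (downStep k) σ' μ) := by
    intro σ σ' hs
    refine ⟨fun h => ?_, fun h => h.head hs⟩
    obtain ⟨ν, -, -, hν⟩ := exists_normal_form k σ
    obtain rfl : μ = ν := eq_of_avoids_of_reduces hμ (hν μ h)
    exact hν σ' (.single hs)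
  induction h with
  | rel _ _ h =>
    rcases twistStep_iff.mp h with h | h
    · exact key h
    · exact (key h).symm
  | refl => rfl
  | symm _ _ _ ih => exact ih.symm
  | trans _ _ _ _ _ ih₁ ih₂ => exact ih₁.trans ih₂

lemma twistCong_of_reduces {k n : ℕ} {σ τ : Equiv.Perm (Fin n)}
    (h : Relation.ReflTransGen (downStep k) σ τ) : twistCong k σ τ := by
  induction h with
  | refl => exact .refl _
  | tail _ h ih => exact .trans _ _ _ ih (.rel _ _ (twistStep_iff.mpr (.inl h)))

/-- For `k ≥ 1` and `n ≥ 1`, every `k`-twist congruence class contains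
exactly one permutation avoiding the decreasing `k`-pattern, and this permutation is the
weak-order minimum of the class. -/
theorem unique_pattern_avoiding_representative
    (k n : ℕ) (hk : 1 ≤ k) (hn : 1 ≤ n) (τ : Equiv.Perm (Fin n)) :
    ∃ μ : Equiv.Perm (Fin n), twistCong k μ τ ∧ avoidsDecreasingPattern k μ ∧
      (∀ σ, twistCong k σ τ → avoidsDecreasingPattern k σ → σ = μ) ∧
      (∀ σ, twistCong k σ τ → weakLE μ σ) := by
  obtain ⟨μ, hμ, hav, -⟩ := exists_normal_form k τ
  have hred : ∀ σ, twistCong k σ τ → Relation.ReflTransGen (downStep k) σ μ :=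
    fun σ hσ => (reduces_iff_of_twistCong hav hσ).mpr hμ
  exact ⟨μ, .symm _ _ (twistCong_of_reduces hμ), hav,
    fun σ hσ hσ' => eq_of_avoids_of_reduces hσ' (hred σ hσ),
    fun σ hσ => reduces_weakLE (hred σ hσ)⟩
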